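/- For every (x,y) ∈ ℝ², the first Reissner–Mindlin equation holds for the pair (θ, w): −∇·(C ε(θ))(x,y) − λ t⁻² (∇w(x,y) − θ(x,y)) = 0; equivalently, ∇·(C ε(θ))(x,y) = (x/2, y/2). -/

import Mathlib

/-! The components of `θ` and `w` restricted to a coordinate line are polynomials of degree at
most four, so every partial derivative comes from `deriv_quartic`. Since `div θ = (4 r² - 2) / (16 D)`
and `Δθ = (8x, 8y) / (16 D)`, where `r² = x² + y²`, both `Δθ` and `∇ div θ` equal `(x, y) / (2 D)`, and
`∇·(C ε(θ)) = D ((1 - ν)/2 (Δθ + ∇ div θ) + ν ∇ div θ) = (x/2, y/2)`. On the other hand the `θ`-part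
of `∇w` cancels and `∇w - θ = -(t² / (2λ)) (x, y)`, so the shear term is `-(x/2, y/2)`. -/

noncomputable section

open Set

/-- Partial derivative in the first variable. -/
def pdx (f : ℝ → ℝ → ℝ) (x y : ℝ) : ℝ := deriv (fun s => f s y) x

/-- Partial derivative in the second variable. -/
def pdy (f : ℝ → ℝ → ℝ) (x y : ℝ) : ℝ := deriv (fun s => f x s) y

/-- Young's modulus. -/
def E : ℝ := 1.092

/-- Poisson's ratio. -/
def ν : ℝ := 0.3

/-- D = E / (12 (1 - ν²)). -/
def Dc : ℝ := E / (12 * (1 - ν ^ 2))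

/-- Shear correction factor λ = 5E / (12 (1 + ν)). -/
def lam : ℝ := 5 * E / (12 * (1 + ν))

/-- First component of the rotation field θ. -/
def θ₁ (x y : ℝ) : ℝ := (1 / (16 * Dc)) * (x * (x ^ 2 + y ^ 2 - 1))

/-- Second component of the rotation field θ. -/
def θ₂ (x y : ℝ) : ℝ := (1 / (16 * Dc)) * (y * (x ^ 2 + y ^ 2 - 1))

/-- Transverse displacement w (depending on the thickness t). -/
def w (t x y : ℝ) : ℝ :=
  (x ^ 2 + y ^ 2) ^ 2 / (64 * Dc)
    - (x ^ 2 + y ^ 2 - 1) * (t ^ 2 / (4 * lam) + 1 / (32 * Dc))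
    - 1 / (64 * Dc)

/-- First component of the row-wise divergence of C ε(θ), where
    (C τ) = D ((1-ν) τ + ν tr(τ) I₂) and ε(θ) = (∇θ + ∇θᵀ)/2. -/
def divCeps₁ (f₁ f₂ : ℝ → ℝ → ℝ) (x y : ℝ) : ℝ :=
  pdx (fun a b => Dc * ((1 - ν) * pdx f₁ a b + ν * (pdx f₁ a b + pdy f₂ a b))) x y
    + pdy (fun a b => Dc * ((1 - ν) * ((pdy f₁ a b + pdx f₂ a b) / 2))) x y

/-- Second component of the row-wise divergence of C ε(θ). -/
def divCeps₂ (f₁ f₂ : ℝ → ℝ → ℝ) (x y : ℝ) : ℝ :=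
  pdx (fun a b => Dc * ((1 - ν) * ((pdy f₁ a b + pdx f₂ a b) / 2))) x y
    + pdy (fun a b => Dc * ((1 - ν) * pdy f₂ a b + ν * (pdx f₁ a b + pdy f₂ a b))) x y

/-- Divergence of the shear vector ∇w - θ. -/
def divShear (W f₁ f₂ : ℝ → ℝ → ℝ) (x y : ℝ) : ℝ :=
  pdx (fun a b => pdx W a b - f₁ a b) x y + pdy (fun a b => pdy W a b - f₂ a b) x y

theorem Dc_ne_zero : Dc ≠ 0 := by norm_num [Dc, E, ν]

theorem lam_ne_zero : lam ≠ 0 := by norm_num [lam, E, ν]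

/-- A function given by a polynomial of degree at most four has the expected derivative. The
identity with the polynomial is a hypothesis so that `f` need not be in normal form. -/
theorem deriv_quartic {f : ℝ → ℝ} (a b c d e : ℝ)
    (hf : ∀ s, f s = a * s ^ 4 + b * s ^ 3 + c * s ^ 2 + d * s + e) (x : ℝ) :
    deriv f x = 4 * a * x ^ 3 + 3 * b * x ^ 2 + 2 * c * x + d := by
  have h := (((((hasDerivAt_pow 4 x).const_mul a).add ((hasDerivAt_pow 3 x).const_mul b)).add
    ((hasDerivAt_pow 2 x).const_mul c)).add ((hasDerivAt_id x).const_mul d)).add_const e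
  have h' : HasDerivAt f _ x := h.congr_of_eventuallyEq (.of_forall fun s => by simp [hf])
  rw [h'.deriv]
  norm_num
  ring

theorem pdx_θ₁ (x y : ℝ) : pdx θ₁ x y = (3 * x ^ 2 + y ^ 2 - 1) / (16 * Dc) := by
  rw [pdx, deriv_quartic 0 (1 / (16 * Dc)) 0 ((y ^ 2 - 1) / (16 * Dc)) 0
    (fun s => by simp only [θ₁]; ring)]
  ring

theorem pdy_θ₁ (x y : ℝ) : pdy θ₁ x y = 2 * x * y / (16 * Dc) := by
  rw [pdy, deriv_quartic 0 0 (x / (16 * Dc)) 0 (x * (x ^ 2 - 1) / (16 * Dc))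
    (fun s => by simp only [θ₁]; ring)]
  ring

theorem pdx_θ₂ (x y : ℝ) : pdx θ₂ x y = 2 * x * y / (16 * Dc) := by
  rw [pdx, deriv_quartic 0 0 (y / (16 * Dc)) 0 (y * (y ^ 2 - 1) / (16 * Dc))
    (fun s => by simp only [θ₂]; ring)]
  ring

theorem pdy_θ₂ (x y : ℝ) : pdy θ₂ x y = (x ^ 2 + 3 * y ^ 2 - 1) / (16 * Dc) := by
  rw [pdy, deriv_quartic 0 (1 / (16 * Dc)) 0 ((x ^ 2 - 1) / (16 * Dc)) 0
    (fun s => by simp only [θ₂]; ring)]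
  ring

theorem pdx_w_sub_θ₁ (t x y : ℝ) : pdx (w t) x y - θ₁ x y = -(t ^ 2 / (2 * lam)) * x := by
  rw [pdx, deriv_quartic (1 / (64 * Dc)) 0
    (2 * y ^ 2 / (64 * Dc) - (t ^ 2 / (4 * lam) + 1 / (32 * Dc))) 0
    (y ^ 4 / (64 * Dc) - (y ^ 2 - 1) * (t ^ 2 / (4 * lam) + 1 / (32 * Dc)) - 1 / (64 * Dc))
    (fun s => by simp only [w]; ring), θ₁]
  ring

theorem pdy_w_sub_θ₂ (t x y : ℝ) : pdy (w t) x y - θ₂ x y = -(t ^ 2 / (2 * lam)) * y := by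
  rw [pdy, deriv_quartic (1 / (64 * Dc)) 0
    (2 * x ^ 2 / (64 * Dc) - (t ^ 2 / (4 * lam) + 1 / (32 * Dc))) 0
    (x ^ 4 / (64 * Dc) - (x ^ 2 - 1) * (t ^ 2 / (4 * lam) + 1 / (32 * Dc)) - 1 / (64 * Dc))
    (fun s => by simp only [w]; ring), θ₂]
  ring

theorem divCeps₁_θ (x y : ℝ) : divCeps₁ θ₁ θ₂ x y = x / 2 := by
  have hD := Dc_ne_zero
  simp only [divCeps₁, pdx_θ₁, pdy_θ₁, pdx_θ₂, pdy_θ₂]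
  rw [pdx, pdy,
    deriv_quartic 0 0 ((3 + ν) / 16) 0 (((1 - ν) * (y ^ 2 - 1) + ν * (4 * y ^ 2 - 2)) / 16)
      (fun s => by field_simp; ring),
    deriv_quartic 0 0 0 ((1 - ν) * x / 8) 0 (fun s => by field_simp; ring)]
  ring

theorem divCeps₂_θ (x y : ℝ) : divCeps₂ θ₁ θ₂ x y = y / 2 := by
  have hD := Dc_ne_zero
  simp only [divCeps₂, pdx_θ₁, pdy_θ₁, pdx_θ₂, pdy_θ₂]
  rw [pdx, pdy,
    deriv_quartic 0 0 0 ((1 - ν) * y / 8) 0 (fun s => by field_simp; ring),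
    deriv_quartic 0 0 ((3 + ν) / 16) 0 (((1 - ν) * (x ^ 2 - 1) + ν * (4 * x ^ 2 - 2)) / 16)
      (fun s => by field_simp; ring)]
  ring

/-- the first Reissner–Mindlin equation
−∇·(C ε(θ)) − λ t⁻² (∇w − θ) = 0 holds at every point of ℝ²; equivalently,
∇·(C ε(θ)) = (x/2, y/2). -/
theorem reissner_mindlin_disk_first_equation (t : ℝ) (ht : 0 < t) :
    ∀ x y : ℝ,
      (-(divCeps₁ θ₁ θ₂ x y) - lam * t⁻¹ ^ 2 * (pdx (w t) x y - θ₁ x y) = 0 ∧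
       -(divCeps₂ θ₁ θ₂ x y) - lam * t⁻¹ ^ 2 * (pdy (w t) x y - θ₂ x y) = 0) ∧
      (divCeps₁ θ₁ θ₂ x y = x / 2 ∧ divCeps₂ θ₁ θ₂ x y = y / 2) := by
  have hl := lam_ne_zero
  have ht' : t ≠ 0 := ht.ne'
  intro x y
  rw [divCeps₁_θ, divCeps₂_θ, pdx_w_sub_θ₁, pdy_w_sub_θ₂]
  refine ⟨⟨?_, ?_⟩, rfl, rfl⟩ <;>
  · field_simp
    ring
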